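/- Let P ∈ 𝔽_q[T] be monic irreducible of degree d, and let n be a positive integer not divisible by q−1 which is a multiple of (q^d−1)/(q−1). Then the residue class of β(n) in the field 𝔽_q[T]/(P) lies in the subfield 𝔽_q; equivalently, (β(n) mod P)^q = β(n) mod P. -/

import Mathlib

/-! If `L/K` is an extension of finite fields, the exponent `(#L - 1) / (#K - 1)` turns an element
of `L` into its norm, so every power with exponent a multiple of it lies in `K`. The residue field
`𝔽_q[T]/(P)` has `q ^ d` elements, hence `β(n)` reduces modulo `P` to a sum of elements of `𝔽_q`. -/

open Polynomial

section FiniteExtension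

variable {K L : Type*} [Field K] [Field L] [Algebra K L]

theorem pow_mem_bot_of_card_sub_one_div_dvd [Finite L] {n : ℕ}
    (hn : (Nat.card L - 1) / (Nat.card K - 1) ∣ n) (x : L) :
    x ^ n ∈ (⊥ : Subalgebra K L) := by
  obtain ⟨k, rfl⟩ := hn
  rw [pow_mul, ← FiniteField.algebraMap_norm_eq_pow]
  exact pow_mem (Subalgebra.algebraMap_mem _ _) k

theorem pow_card_eq_self_of_mem_bot {A : Type*} [Semiring A] [Algebra K A] [Fintype K] {x : A}
    (hx : x ∈ (⊥ : Subalgebra K A)) : x ^ Fintype.card K = x := by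
  obtain ⟨c, rfl⟩ := Algebra.mem_bot.mp hx
  rw [← map_pow, FiniteField.pow_card]

end FiniteExtension

section Quotient

variable {F : Type*} [Field F]

theorem finite_quotient_span_singleton {P : F[X]} (hP : P ≠ 0) :
    Module.Finite F (F[X] ⧸ Ideal.span {P}) :=
  (AdjoinRoot.powerBasis hP).finite

theorem natCard_quotient_span_singleton {P : F[X]} (hP : P ≠ 0) :
    Nat.card (F[X] ⧸ Ideal.span {P}) = Nat.card F ^ P.natDegree := by
  have := finite_quotient_span_singleton hP
  rw [Module.natCard_eq_pow_finrank (K := F), finrank_quotient_span_eq_natDegree]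

end Quotient

section BernoulliGoss

/-- The Bernoulli–Goss value `β(n) = Σ_{m ≥ 0} Σ_{a ∈ A_m} a ^ n` over a finite field `F`, where
`A_m` is the set of monic polynomials of degree `m`. Encoding the outer sum as a `finsum` is
harmless: the inner sum vanishes as soon as `m * (#F - 1) > n`. -/
noncomputable def bernoulliGoss (F : Type*) [Field F] (n : ℕ) : F[X] :=
  ∑ᶠ m : ℕ, ∑ᶠ a ∈ {a : F[X] | a.Monic ∧ a.natDegree = m}, a ^ n

variable {F : Type*} [Field F]

theorem bernoulliGoss_mem {S : AddSubmonoid F[X]} {n : ℕ} (hS : ∀ a : F[X], a.Monic → a ^ n ∈ S) :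
    bernoulliGoss F n ∈ S :=
  finsum_induction (· ∈ S) S.zero_mem (fun _ _ ↦ S.add_mem) fun _ ↦
    finsum_mem_induction (· ∈ S) S.zero_mem (fun _ _ ↦ S.add_mem) fun a ha ↦ hS a ha.1

theorem map_bernoulliGoss_mem_bot {L : Type*} [Field L] [Finite L] [Algebra F L]
    (φ : F[X] →ₐ[F] L) {n : ℕ} (hn : (Nat.card L - 1) / (Nat.card F - 1) ∣ n) :
    φ (bernoulliGoss F n) ∈ (⊥ : Subalgebra F L) := by
  refine bernoulliGoss_mem (S := ((⊥ : Subalgebra F L).comap φ).toAddSubmonoid) fun a _ ↦ ?_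
  change φ (a ^ n) ∈ (⊥ : Subalgebra F L)
  rw [map_pow]
  exact pow_mem_bot_of_card_sub_one_div_dvd hn (φ a)

end BernoulliGoss

theorem stmt_4_general {F : Type*} [Field F] [Fintype F] {P : F[X]} (hP : Irreducible P) {n : ℕ}
    (hn : (Fintype.card F ^ P.natDegree - 1) / (Fintype.card F - 1) ∣ n) :
    Ideal.Quotient.mk (Ideal.span {P}) (bernoulliGoss F n) ^ Fintype.card F =
      Ideal.Quotient.mk (Ideal.span {P}) (bernoulliGoss F n) := by
  have := PrincipalIdealRing.isMaximal_of_irreducible hP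
  let := Ideal.Quotient.field (Ideal.span {P})
  have := finite_quotient_span_singleton hP.ne_zero
  have : Finite (F[X] ⧸ Ideal.span {P}) := Module.finite_of_finite F
  rw [← Nat.card_eq_fintype_card, ← natCard_quotient_span_singleton hP.ne_zero] at hn
  exact pow_card_eq_self_of_mem_bot
    (map_bernoulliGoss_mem_bot (Ideal.Quotient.mkₐ F (Ideal.span {P})) hn)

/-- Let `P ∈ 𝔽_q[T]` be monic irreducible of degree `d` and let `n` be a positive integer not
divisible by `q − 1` which is a multiple of `(q^d − 1)/(q − 1)`. Then the residue class of the
Bernoulli–Goss value `β(n) = Σ_{m ≥ 0} Σ_{a ∈ A_m} a^n` in `𝔽_q[T]/(P)` lies in the subfield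
`𝔽_q`, i.e. `(β(n) mod P)^q = β(n) mod P`. -/
theorem stmt_4 (p s : ℕ) [Fact p.Prime] (F : Type*) [Field F] [Fintype F]
    (hq : Fintype.card F = p ^ s)
    (P : Polynomial F) (hP : P.Monic) (hirr : Irreducible P) (d : ℕ) (hd : P.natDegree = d)
    (n : ℕ) (hn : 0 < n) (hndvd : ¬ (Fintype.card F - 1) ∣ n)
    (hmult : ((Fintype.card F ^ d - 1) / (Fintype.card F - 1)) ∣ n) :
    (Ideal.Quotient.mk (Ideal.span {P})
        (∑ᶠ m : ℕ, ∑ᶠ a ∈ {a : Polynomial F | a.Monic ∧ a.natDegree = m}, a ^ n))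
        ^ (Fintype.card F) =
      Ideal.Quotient.mk (Ideal.span {P})
        (∑ᶠ m : ℕ, ∑ᶠ a ∈ {a : Polynomial F | a.Monic ∧ a.natDegree = m}, a ^ n) := by
  subst hd
  exact stmt_4_general hirr hmult
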